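/- Suppose A ∈ A satisfies End_A(A) = k. Then E_A ⋆ F_A − F_A ⋆ E_A = (q − 1)·(K^†_{[A]} − K_{[A]}) in DH(R). -/

import Mathlib

set_option linter.unusedSectionVars false

open CategoryTheory CategoryTheory.Limits Opposite

noncomputable section

universe u

variable (k : Type) [Field k] [Fintype k]
variable (R : Type u) [SmallCategory R] [Abelian R] [Linear k R] [EnoughProjectives R]

/-- The objects `A` of `R` such that `Hom(M, A)` is a finite set for every `M`. -/
def IsFinHom (A : R) : Prop := ∀ M : R, Finite (M ⟶ A)

/-- The Euler form `⟨M,A⟩ = dim Hom(M,A) - dim Ext¹(M,A)`. -/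
def euler (M A : R) : ℤ :=
  (Module.finrank k (M ⟶ A) : ℤ) -
    (Module.finrank k (((_root_.Ext k R 1).obj (op M)).obj A) : ℤ)

/-- The set of relations defining the Grothendieck group of `R`. -/
def sesSet : Set (FreeAbelianGroup R) :=
  {x | ∃ S : ShortComplex R, S.ShortExact ∧
    x = FreeAbelianGroup.of S.X₂ - FreeAbelianGroup.of S.X₁ - FreeAbelianGroup.of S.X₃}

/-- The Grothendieck group `K(R)`. -/
abbrev K0 := FreeAbelianGroup R ⧸ AddSubgroup.closure (sesSet R)

/-- The class of an object in `K(R)`. -/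
def K0.cls (X : R) : K0 R := QuotientAddGroup.mk (FreeAbelianGroup.of X)

/-- The set of relations defining the Grothendieck group of the subcategory `A`. -/
def sesSetA : Set (FreeAbelianGroup {A : R // IsFinHom R A}) :=
  {x | ∃ (S : ShortComplex R) (h1 : IsFinHom R S.X₁) (h2 : IsFinHom R S.X₂)
      (h3 : IsFinHom R S.X₃), S.ShortExact ∧
    x = FreeAbelianGroup.of ⟨S.X₂, h2⟩ - FreeAbelianGroup.of ⟨S.X₁, h1⟩ -
      FreeAbelianGroup.of ⟨S.X₃, h3⟩}

/-- The Grothendieck group `K(A)`. -/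
abbrev KA := FreeAbelianGroup {A : R // IsFinHom R A} ⧸ AddSubgroup.closure (sesSetA R)

/-- The class of an object of `A` in `K(A)`. -/
def KA.cls (A : {A : R // IsFinHom R A}) : KA R := QuotientAddGroup.mk (FreeAbelianGroup.of A)

/-- `R` is hereditary, i.e. of global dimension at most 1. -/
def Hereditary : Prop :=
  ∀ X Y : R, Subsingleton (((_root_.Ext k R 2).obj (op X)).obj Y)

/-- Condition (c): cancellation for projectives. -/
def CondC : Prop :=
  ∀ P Q M : R, Projective P → Projective Q → Projective M →
    Nonempty ((M ⊞ P) ≅ (M ⊞ Q)) → Nonempty (P ≅ Q)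

/-- Condition (d): every element of `K(R)` is a `ℚ`-linear combination of classes of
objects of `A`. -/
def CondD : Prop :=
  ∀ x : K0 R, ∃ n : ℕ, n ≠ 0 ∧ (n : ℤ) • x ∈
    AddSubgroup.closure (Set.range fun A : {A : R // IsFinHom R A} => K0.cls R A.1)

/-- Condition (e). -/
def CondE : Prop :=
  ∀ A B : R, IsFinHom R A → IsFinHom R B → K0.cls R A = K0.cls R B →
    ∀ P : R, Projective P → Nat.card (P ⟶ A) = Nat.card (P ⟶ B)

structure Z2Cx where
  X0 : R
  X1 : R
  d0 : X0 ⟶ X1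
  d1 : X1 ⟶ X0
  d01 : d0 ≫ d1 = 0
  d10 : d1 ≫ d0 = 0

namespace Z2Cx

variable {R}

/-- Morphisms of `ℤ/2`-graded complexes. -/
@[ext] structure Hom (M N : Z2Cx R) where
  f0 : M.X0 ⟶ N.X0
  f1 : M.X1 ⟶ N.X1
  comm0 : M.d0 ≫ f1 = f0 ≫ N.d0
  comm1 : M.d1 ≫ f0 = f1 ≫ N.d1

instance : CategoryStruct (Z2Cx R) where
  Hom := Hom
  id M := ⟨𝟙 _, 𝟙 _, by simp, by simp⟩
  comp {M N P} f g := ⟨f.f0 ≫ g.f0, f.f1 ≫ g.f1, by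
      rw [← Category.assoc, f.comm0, Category.assoc, g.comm0, Category.assoc], by
      rw [← Category.assoc, f.comm1, Category.assoc, g.comm1, Category.assoc]⟩

@[simp] lemma id_f0 (M : Z2Cx R) : (𝟙 M : Hom M M).f0 = 𝟙 M.X0 := rfl
@[simp] lemma id_f1 (M : Z2Cx R) : (𝟙 M : Hom M M).f1 = 𝟙 M.X1 := rfl
@[simp] lemma comp_f0 {M N P : Z2Cx R} (f : M ⟶ N) (g : N ⟶ P) :
    (f ≫ g).f0 = Hom.f0 f ≫ Hom.f0 g := rfl
@[simp] lemma comp_f1 {M N P : Z2Cx R} (f : M ⟶ N) (g : N ⟶ P) :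
    (f ≫ g).f1 = Hom.f1 f ≫ Hom.f1 g := rfl

instance : Category (Z2Cx R) where
  id_comp f := by apply Hom.ext <;> simp
  comp_id f := by apply Hom.ext <;> simp
  assoc f g h := by apply Hom.ext <;> simp

variable (R)

/-- The two-term complex `C_f` associated to a morphism `f`, concentrated so that
`X1 = P`, `X0 = Q`, `d1 = f`, `d0 = 0`. -/
def Cf {P Q : R} (f : P ⟶ Q) : Z2Cx R := ⟨Q, P, 0, f, by simp, by simp⟩

/-- The shift involution `†`: it interchanges the gradings and negates the differentials. -/
def dagger (M : Z2Cx R) : Z2Cx R :=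
  ⟨M.X1, M.X0, -M.d1, -M.d0, by simp [M.d10], by simp [M.d01]⟩

/-- The acyclic complex `K_P` with `d1 = 𝟙 P` and `d0 = 0`. -/
def KP (P : R) : Z2Cx R := ⟨P, P, 0, 𝟙 P, by simp, by simp⟩

/-- Direct sum of `ℤ/2`-graded complexes. -/
def dsum (M N : Z2Cx R) : Z2Cx R where
  X0 := M.X0 ⊞ N.X0
  X1 := M.X1 ⊞ N.X1
  d0 := biprod.map M.d0 N.d0
  d1 := biprod.map M.d1 N.d1
  d01 := by ext <;> simp [M.d01, N.d01]
  d10 := by ext <;> simp [M.d10, N.d10]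

/-- Degree `0` homology of a `ℤ/2`-graded complex. -/
def H0 (M : Z2Cx R) : R := (ShortComplex.mk M.d1 M.d0 M.d10).homology

/-- Degree `1` homology of a `ℤ/2`-graded complex. -/
def H1 (M : Z2Cx R) : R := (ShortComplex.mk M.d0 M.d1 M.d01).homology

/-- The homology complex `H•(M•)`, with zero differentials. -/
def Hcx (M : Z2Cx R) : Z2Cx R := ⟨H0 R M, H1 R M, 0, 0, by simp, by simp⟩

/-- A complex is acyclic if its homology vanishes. -/
def Acyclic (M : Z2Cx R) : Prop := IsZero (H0 R M) ∧ IsZero (H1 R M)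

end Z2Cx

namespace Z2Cx

variable {R}

/-- A short exact sequence of `ℤ/2`-graded complexes, exhibiting an extension of `M` by `N`
(short exactness of a sequence of complexes is componentwise short exactness). -/
structure ExtSES (M N : Z2Cx R) where
  E : Z2Cx R
  i : N ⟶ E
  p : E ⟶ M
  w0 : Hom.f0 i ≫ Hom.f0 p = 0
  w1 : Hom.f1 i ≫ Hom.f1 p = 0
  ex0 : (ShortComplex.mk (Hom.f0 i) (Hom.f0 p) w0).ShortExact
  ex1 : (ShortComplex.mk (Hom.f1 i) (Hom.f1 p) w1).ShortExact

/-- Equivalence of extensions of complexes. -/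
def ExtEquiv (M N : Z2Cx R) (s t : ExtSES M N) : Prop :=
  ∃ φ : s.E ≅ t.E, s.i ≫ φ.hom = t.i ∧ φ.hom ≫ t.p = s.p

/-- The set `Ext¹_{C(R)}(M•, N•)` of equivalence classes of extensions of `M•` by `N•`
in the category of `ℤ/2`-graded complexes over `R`. -/
def ExtCl (M N : Z2Cx R) := Quot (ExtEquiv M N)

end Z2Cx

/-- Complexes of projectives with homology in the subcategory `A`, i.e. objects
of `C_fin(P)`. -/
def FinCx (M : Z2Cx R) : Prop :=
  Projective M.X0 ∧ Projective M.X1 ∧ IsFinHom R (Z2Cx.H0 R M) ∧ IsFinHom R (Z2Cx.H1 R M)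

attribute [local instance] Classical.propDecidable

/-- The class `[M•] = [M₀] - [M₁]` in `K(R)` of a `ℤ/2`-graded complex. -/
def clsOf (M : Z2Cx R) : K0 R := K0.cls R M.X0 - K0.cls R M.X1

/-- Isomorphism of `ℤ/2`-graded complexes, as a relation. -/
def cxRel (M N : Z2Cx R) : Prop := Nonempty (M ≅ N)

/-- Isomorphism classes of `ℤ/2`-graded complexes. -/
def CxCls := Quot (cxRel R)

/-- The isomorphism class of a complex. -/
def ccls (M : Z2Cx R) : CxCls R := Quot.mk _ M

/-- The isomorphism class of the middle term of an extension class. -/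
def extMid {M N : Z2Cx R} : Z2Cx.ExtCl M N → CxCls R :=
  Quot.lift (fun s => ccls R s.E) (fun s t h => by
    obtain ⟨φ, -, -⟩ := h
    exact Quot.sound ⟨φ⟩)

/-- `|Ext¹_{C(R)}(M•,N•)_{P•}|` : the number of extension classes of `M•` by `N•` whose
middle term has isomorphism class `c`. -/
def extCount (M N : Z2Cx R) (c : CxCls R) : ℕ :=
  Nat.card {x : Z2Cx.ExtCl M N // extMid R x = c}

/-- The `ℚ`-valued extension of the Euler form to `K(R) × K(R)`
(which exists by condition (d)). -/
structure EulerData where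
  eQ : K0 R →+ K0 R →+ ℚ
  compat : ∀ (M A : R), IsFinHom R A →
    eQ (K0.cls R M) (K0.cls R A) = euler k R M A

/-- A choice, for every complex of projectives `M•`, of the classes `[M₁⁺]` and `[M₀⁻]`
of the components of the canonical decomposition `M• = M•⁺ ⊕ M•⁻ = C_f ⊕ C_g^†`. -/
structure DecData where
  cplus : Z2Cx R → K0 R
  cminus : Z2Cx R → K0 R
  spec : ∀ M : Z2Cx R, Projective M.X0 → Projective M.X1 →
    ∃ (P Q P' Q' : R) (f : P ⟶ Q) (g : P' ⟶ Q'),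
      Projective P ∧ Projective Q ∧ Projective P' ∧ Projective Q' ∧
      Mono f ∧ Mono g ∧
      Nonempty (M ≅ Z2Cx.dsum R (Z2Cx.Cf R f) (Z2Cx.dagger R (Z2Cx.Cf R g))) ∧
      cplus M = K0.cls R P ∧ cminus M = K0.cls R P'

variable {k R}

/-- `μ(M•,N•) = Σ_{i,j} ⟨[Mᵢ^{ε(j)}], [N_{j+1}^{ε(i)}]⟩`. -/
def mu (ed : EulerData k R) (dd : DecData R) (M N : Z2Cx R) : ℚ :=
  ed.eQ (K0.cls R M.X0 - dd.cminus M) (dd.cplus N) +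
    ed.eQ (dd.cplus M) (K0.cls R N.X1 - dd.cplus N) +
    ed.eQ (dd.cminus M) (K0.cls R N.X0 - dd.cminus N) +
    ed.eQ (K0.cls R M.X1 - dd.cplus M) (dd.cminus N)

/-- `h(M•,N•) = q^{μ(M•,N•)} ⬝ |Hom_{C(R)}(H•(M•), H•(N•))|`. -/
def hVal (ed : EulerData k R) (dd : DecData R) (M N : Z2Cx R) : ℝ :=
  (Fintype.card k : ℝ) ^ ((mu ed dd M N : ℚ) : ℝ) *
    (Nat.card (Z2Cx.Hcx R M ⟶ Z2Cx.Hcx R N) : ℝ)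

/-- The structure constants of the Hall algebra `H(C_fin(P))`:
the coefficient of the basis element `c` in `[M•] ⋆ [N•]`. -/
def hallCoeff (v : ℝ) (ed : EulerData k R) (dd : DecData R) (M N : Z2Cx R)
    (c : CxCls R) : ℂ :=
  (((v ^ (((ed.eQ (K0.cls R M.X0) (K0.cls R N.X0) +
      ed.eQ (K0.cls R M.X1) (K0.cls R N.X1) : ℚ)) : ℝ) *
    (extCount R M N c : ℝ) / hVal ed dd M N : ℝ)) : ℂ)

variable (k R)

/-- Objects of `C_fin(P)`. -/
def FCx := {M : Z2Cx R // FinCx R M}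

/-- Isomorphism classes of objects of `C_fin(P)`. -/
def FCls := Quot (fun M N : FCx R => Nonempty (M.1 ≅ N.1))

/-- The isomorphism class of an object of `C_fin(P)`. -/
def fcls (M : FCx R) : FCls R := Quot.mk _ M

/-- Comparison of isomorphism classes in `C_fin(P)` with isomorphism classes of
arbitrary complexes. -/
def fc2c : FCls R → CxCls R :=
  Quot.lift (fun M => ccls R M.1) (fun _ _ h => Quot.sound h)

/-- The symmetrized Euler form `(α,β) = ⟨α,β⟩ + ⟨β,α⟩`. -/
def sForm (ed : EulerData k R) (a b : K0 R) : ℚ := ed.eQ a b + ed.eQ b a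

open ZeroObject in
/-- The zero complex. -/
def zeroCx : Z2Cx R := ⟨0, 0, 0, 0, by simp, by simp⟩

/-- All the data constituting the localized Hall algebra `DH(R)`:
the Hall algebra `H(C_fin(P))` (a free `ℂ`-module on the isomorphism classes of
`C_fin(P)`, with the Hall multiplication `mulH` determined by the structure constants
`hallCoeff`), and its localization `D` at the classes of acyclic complexes, together
with the elements `K_α ⋆ K_β^† = KK (α, β)` and the canonical map `loc`.  The axioms
express that `D` is precisely the localization of `H(C_fin(P))` at the classes of
acyclic complexes, with the `ℂ[K(R) × K(R)]`-bimodule structure of the paper. -/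
structure DHSetting where
  v : ℝ
  v_pos : 0 < v
  v_sq : v ^ 2 = (Fintype.card k : ℝ)
  ed : EulerData k R
  dd : DecData R
  /-- the Hall multiplication on `H(C_fin(P))` -/
  mulH : ((FCls R) →₀ ℂ) →ₗ[ℂ] ((FCls R) →₀ ℂ) →ₗ[ℂ] ((FCls R) →₀ ℂ)
  mulH_single : ∀ (M N : FCx R) (c : FCls R),
    (mulH (Finsupp.single (fcls R M) 1) (Finsupp.single (fcls R N) 1)) c
      = hallCoeff v ed dd M.1 N.1 (fc2c R c)
  /-- the carrier of the localized Hall algebra `DH(R)` -/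
  D : Type u
  [grp : AddCommGroup D]
  [mod : Module ℂ D]
  /-- the multiplication `⋆` of `DH(R)` -/
  mulD : D →ₗ[ℂ] D →ₗ[ℂ] D
  one : D
  one_mul : ∀ d, mulD one d = d
  mul_one : ∀ d, mulD d one = d
  /-- the canonical map `H(C_fin(P)) → DH(R)` -/
  loc : ((FCls R) →₀ ℂ) →ₗ[ℂ] D
  loc_one : ∀ h : FinCx R (zeroCx R),
    loc (Finsupp.single (fcls R ⟨zeroCx R, h⟩) 1) = one
  loc_mul : ∀ x y, mulD (loc x) (loc y) = loc (mulH x y)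
  /-- the elements `K_α ⋆ K_β^†` -/
  KK : K0 R × K0 R → D
  KK_zero : KK 0 = one
  KK_mul : ∀ a b, mulD (KK a) (KK b) = KK (a + b)
  KK_P : ∀ (P : R), Projective P → ∀ h : FinCx R (Z2Cx.KP R P),
    loc (Finsupp.single (fcls R ⟨Z2Cx.KP R P, h⟩) 1) = KK (K0.cls R P, 0)
  KK_Pd : ∀ (P : R), Projective P → ∀ h : FinCx R (Z2Cx.dagger R (Z2Cx.KP R P)),
    loc (Finsupp.single (fcls R ⟨Z2Cx.dagger R (Z2Cx.KP R P), h⟩) 1) = KK (0, K0.cls R P)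
  /-- the bimodule rule `(K_α ⋆ K_β^†) ⋆ [M•] = v^{(α-β,[M•])} [M•] ⋆ (K_α ⋆ K_β^†)` -/
  comm_rule : ∀ (a b : K0 R) (M : FCx R),
    mulD (KK (a, b)) (loc (Finsupp.single (fcls R M) 1)) =
      (((v ^ ((sForm k R ed (a - b) (clsOf R M.1) : ℚ) : ℝ) : ℝ) : ℂ)) •
        mulD (loc (Finsupp.single (fcls R M) 1)) (KK (a, b))
  /-- multiplication of elements in standard form is induced by the Hall multiplication -/
  mul_general : ∀ (x : (FCls R) →₀ ℂ) (M : FCx R) (a b a' b' : K0 R),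
    mulD (mulD (loc x) (KK (a, b))) (mulD (loc (Finsupp.single (fcls R M) 1)) (KK (a', b'))) =
      (((v ^ ((sForm k R ed (a - b) (clsOf R M.1) : ℚ) : ℝ) : ℝ) : ℂ)) •
        mulD (loc (mulH x (Finsupp.single (fcls R M) 1))) (KK (a + a', b + b'))
  /-- every element of the localization has the standard form `x ⋆ K_α ⋆ K_β^†` -/
  span : ∀ d : D, ∃ (x : (FCls R) →₀ ℂ) (a b : K0 R), d = mulD (loc x) (KK (a, b))
  /-- the kernel of the localization map is exactly the torsion with respect to the
  classes of acyclic complexes -/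
  loc_ker : ∀ x, loc x = 0 ↔ ∃ (K : Z2Cx R) (h : FinCx R K),
    Z2Cx.Acyclic R K ∧ mulH x (Finsupp.single (fcls R ⟨K, h⟩) 1) = 0

attribute [instance] DHSetting.grp DHSetting.mod

variable {k R}

/-- The element `E_{M•} = v^{⟨[M₁⁺]-[M₀⁻],[M•]⟩} K_{-[M₁⁺]} ⋆ K^†_{-[M₀⁻]} ⋆ [M•]`
of the localized Hall algebra. -/
def Eelt (S : DHSetting k R) (M : Z2Cx R) (h : FinCx R M) : S.D :=
  (((S.v ^ ((S.ed.eQ (S.dd.cplus M - S.dd.cminus M) (clsOf R M) : ℚ) : ℝ) : ℝ) : ℂ)) •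
    S.mulD (S.KK (-(S.dd.cplus M), -(S.dd.cminus M)))
      (S.loc (Finsupp.single (fcls R ⟨M, h⟩) 1))

namespace Z2Cx

/-- Build an isomorphism of complexes from componentwise isomorphisms. -/
def isoMk {M N : Z2Cx R} (e0 : M.X0 ≅ N.X0) (e1 : M.X1 ≅ N.X1)
    (h0 : M.d0 ≫ e1.hom = e0.hom ≫ N.d0) (h1 : M.d1 ≫ e0.hom = e1.hom ≫ N.d1) : M ≅ N where
  hom := ⟨e0.hom, e1.hom, h0, h1⟩
  inv := ⟨e0.inv, e1.inv, by
      rw [Iso.comp_inv_eq, Category.assoc, h0, Iso.inv_hom_id_assoc], by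
      rw [Iso.comp_inv_eq, Category.assoc, h1, Iso.inv_hom_id_assoc]⟩
  hom_inv_id := by apply Hom.ext <;> simp
  inv_hom_id := by apply Hom.ext <;> simp

/-- Component in degree 0 of an isomorphism. -/
def iso0 {M N : Z2Cx R} (e : M ≅ N) : M.X0 ≅ N.X0 where
  hom := Hom.f0 e.hom
  inv := Hom.f0 e.inv
  hom_inv_id := congrArg Hom.f0 e.hom_inv_id
  inv_hom_id := congrArg Hom.f0 e.inv_hom_id

/-- Component in degree 1 of an isomorphism. -/
def iso1 {M N : Z2Cx R} (e : M ≅ N) : M.X1 ≅ N.X1 where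
  hom := Hom.f1 e.hom
  inv := Hom.f1 e.inv
  hom_inv_id := congrArg Hom.f1 e.hom_inv_id
  inv_hom_id := congrArg Hom.f1 e.inv_hom_id

lemma extEquiv_refl {M N : Z2Cx R} (s : ExtSES M N) : ExtEquiv M N s s :=
  ⟨Iso.refl _, by simp, by simp⟩

lemma extEquiv_symm {M N : Z2Cx R} {s t : ExtSES M N} (h : ExtEquiv M N s t) :
    ExtEquiv M N t s := by
  obtain ⟨φ, h1, h2⟩ := h
  exact ⟨φ.symm, by simp [← h1], by simp [← h2]⟩

lemma extEquiv_trans {M N : Z2Cx R} {s t r : ExtSES M N} (h : ExtEquiv M N s t)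
    (h' : ExtEquiv M N t r) : ExtEquiv M N s r := by
  obtain ⟨φ, h1, h2⟩ := h
  obtain ⟨ψ, h3, h4⟩ := h'
  exact ⟨φ ≪≫ ψ, by simp [← h1, ← h3], by simp [← h2, ← h4]⟩

lemma extCl_eq {M N : Z2Cx R} {s t : ExtSES M N} :
    (Quot.mk _ s : ExtCl M N) = Quot.mk _ t ↔ ExtEquiv M N s t := by
  constructor
  · intro h
    have := Quot.eqvGen_exact h
    induction this with
    | rel _ _ h' => exact h'
    | refl _ => exact extEquiv_refl _
    | symm _ _ h' ih => exact extEquiv_symm (ih (Quot.eqvGen_sound h'))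
    | trans _ _ _ h1 h2 ih1 ih2 =>
      exact extEquiv_trans (ih1 (Quot.eqvGen_sound h1)) (ih2 (Quot.eqvGen_sound h2))
  · exact fun h => Quot.sound h

section EaSec
variable {P Q P' Q' : R} (f : P ⟶ Q) (g : P' ⟶ Q')

/-- The complex underlying the extension attached to a chain map. -/
def EaCx (a0 : Q ⟶ Q') (a1 : P ⟶ P') (h : a1 ≫ g = f ≫ a0) : Z2Cx R where
  X0 := Q ⊞ P'
  X1 := P ⊞ Q'
  d0 := biprod.desc (a0 ≫ biprod.inr) (-(g ≫ biprod.inr))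
  d1 := biprod.desc (f ≫ biprod.inl + a1 ≫ biprod.inr) 0
  d01 := by ext <;> simp
  d10 := by
    apply biprod.hom_ext' <;> apply biprod.hom_ext <;> simp [reassoc_of% h]

lemma biprod_shortExact (X Y : R) :
    (ShortComplex.mk (biprod.inr : Y ⟶ X ⊞ Y) (biprod.fst : X ⊞ Y ⟶ X) (by simp)).ShortExact :=
  ShortComplex.Splitting.shortExact
    { r := biprod.snd, s := biprod.inl
      f_r := by simp
      s_g := by simp
      id := by simp [add_comm, biprod.total] }

lemma desc_isIso {X Y E : R} {i : Y ⟶ E} {p : E ⟶ X} {w : i ≫ p = 0}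
    (ex : (ShortComplex.mk i p w).ShortExact) (s : X ⟶ E) (hs : s ≫ p = 𝟙 X) :
    IsIso (biprod.desc s i) := by
  let m : ShortComplex.mk (biprod.inr : Y ⟶ X ⊞ Y) (biprod.fst : X ⊞ Y ⟶ X) (by simp) ⟶
      ShortComplex.mk i p w :=
    { τ₁ := 𝟙 Y, τ₂ := biprod.desc s i, τ₃ := 𝟙 X
      comm₁₂ := by simp
      comm₂₃ := by apply biprod.hom_ext' <;> simp [hs, w] }
  have : IsIso m.τ₁ := inferInstanceAs (IsIso (𝟙 Y))
  have : IsIso m.τ₃ := inferInstanceAs (IsIso (𝟙 X))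
  exact ShortComplex.isIso₂_of_shortExact_of_isIso₁₃ m (biprod_shortExact _ _) ex

/-- The extension attached to a chain map. -/
def Ea (a0 : Q ⟶ Q') (a1 : P ⟶ P') (h : a1 ≫ g = f ≫ a0) :
    ExtSES (Cf R f) (dagger R (Cf R g)) where
  E := EaCx f g a0 a1 h
  i := ⟨biprod.inr, biprod.inr, by simp [EaCx, dagger, Cf], by simp [EaCx, dagger, Cf]⟩
  p := ⟨biprod.fst, biprod.fst,
    by simp only [EaCx, Cf]; ext <;> simp, by simp only [EaCx, Cf]; ext <;> simp⟩
  w0 := biprod.inr_fst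
  w1 := biprod.inr_fst
  ex0 := biprod_shortExact Q P'
  ex1 := biprod_shortExact P Q'

lemma ext_exists [Projective P] [Projective Q] (s : ExtSES (Cf R f) (dagger R (Cf R g))) :
    ∃ a0 a1 h, ExtEquiv _ _ s (Ea f g a0 a1 h) := by
  obtain ⟨E, ⟨i0, i1, ci0, ci1⟩, ⟨p0, p1, cp0, cp1⟩, w0, w1, ex0, ex1⟩ := s
  dsimp [Cf, dagger] at i0 i1 p0 p1 ci0 ci1 cp0 cp1 w0 w1 ex0 ex1
  have := ex0.epi_g
  have := ex1.epi_g
  have := ex0.mono_f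
  have := ex1.mono_f
  dsimp at *
  have hs0 := Projective.factorThru_comp (𝟙 Q) p0
  have hs1 := Projective.factorThru_comp (𝟙 P) p1
  set s0 := Projective.factorThru (𝟙 Q) p0
  set s1 := Projective.factorThru (𝟙 P) p1
  obtain ⟨a0, ha0⟩ : ∃ a0 : Q ⟶ Q', a0 ≫ i1 = s0 ≫ E.d0 :=
    ⟨ex1.exact.lift (s0 ≫ E.d0) (by dsimp; rw [Category.assoc, cp0]; simp),
      ex1.exact.lift_f _ _⟩
  obtain ⟨a1, ha1⟩ : ∃ a1 : P ⟶ P', a1 ≫ i0 = s1 ≫ E.d1 - f ≫ s0 :=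
    ⟨ex0.exact.lift (s1 ≫ E.d1 - f ≫ s0) (by
        dsimp; rw [Preadditive.sub_comp, Category.assoc, Category.assoc, cp1, hs0,
          reassoc_of% hs1]; simp),
      ex0.exact.lift_f _ _⟩
  have h : a1 ≫ g = f ≫ a0 := by
    rw [← cancel_mono i1, Category.assoc, Category.assoc, ha0]
    have e : g ≫ i1 = - (i0 ≫ E.d0) := by rw [← ci0]; simp
    rw [e, Preadditive.comp_neg, reassoc_of% ha1, Preadditive.sub_comp, Category.assoc,
      E.d10]
    simp
  refine ⟨a0, a1, h, ?_⟩
  apply extEquiv_symm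
  have j0 : IsIso (biprod.desc s0 i0) := desc_isIso ex0 s0 hs0
  have j1 : IsIso (biprod.desc s1 i1) := desc_isIso ex1 s1 hs1
  let k0 : (Q ⊞ P') ≅ E.X0 := @asIso _ _ _ _ (biprod.desc s0 i0) j0
  let k1 : (P ⊞ Q') ≅ E.X1 := @asIso _ _ _ _ (biprod.desc s1 i1) j1
  have w0' : i0 ≫ p0 = (0 : P' ⟶ Q) := w0
  have w1' : i1 ≫ p1 = (0 : Q' ⟶ P) := w1
  refine ⟨isoMk (M := EaCx f g a0 a1 h) k0 k1 ?_ ?_, ?_, ?_⟩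
  · apply biprod.hom_ext' <;> simp [EaCx, ha0, k0, k1]
    rw [← ci0]; simp
  · apply biprod.hom_ext' <;> simp [EaCx, ha1, k0, k1]
    rw [← ci1]; simp
  · apply Hom.ext
    · exact biprod.inr_desc _ _
    · exact biprod.inr_desc _ _
  · apply Hom.ext
    · have e : biprod.desc s0 i0 ≫ p0 = (biprod.fst : Q ⊞ P' ⟶ Q) := by
        apply biprod.hom_ext' <;> simp [hs0, w0']
      exact e
    · have e : biprod.desc s1 i1 ≫ p1 = (biprod.fst : P ⊞ Q' ⟶ P) := by
        apply biprod.hom_ext' <;> simp [hs1, w1']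
      exact e

lemma Ea_equiv {B : R} (ρ : Q' ⟶ B) [Mono g]
    (hker : ∀ x : Q ⟶ Q', x ≫ ρ = 0 → ∃ s : Q ⟶ P', s ≫ g = x)
    (a0 b0 : Q ⟶ Q') (a1 b1 : P ⟶ P') (ha : a1 ≫ g = f ≫ a0) (hb : b1 ≫ g = f ≫ b0)
    (h : a0 ≫ ρ = b0 ≫ ρ) : ExtEquiv _ _ (Ea f g a0 a1 ha) (Ea f g b0 b1 hb) := by
  obtain ⟨s, hs⟩ := hker (a0 - b0) (by simp [h])
  have hs1 : f ≫ s = a1 - b1 := by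
    rw [← cancel_mono g, Category.assoc, hs]; simp [ha, hb]
  let e0 : (Q ⊞ P') ≅ (Q ⊞ P') :=
    { hom := 𝟙 _ - biprod.fst ≫ s ≫ biprod.inr
      inv := 𝟙 _ + biprod.fst ≫ s ≫ biprod.inr
      hom_inv_id := by simp
      inv_hom_id := by simp }
  refine ⟨isoMk (M := EaCx f g a0 a1 ha) (N := EaCx f g b0 b1 hb) e0 (Iso.refl _) ?_ ?_, ?_, ?_⟩
  · apply biprod.hom_ext' <;> simp [EaCx, e0]
    rw [reassoc_of% hs]; simp
  · apply biprod.hom_ext' <;> simp [EaCx, e0]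
    rw [reassoc_of% hs1]; simp; abel
  · apply Hom.ext
    · have e : (biprod.inr : P' ⟶ Q ⊞ P') ≫ (𝟙 (Q ⊞ P') - biprod.fst ≫ s ≫ biprod.inr) =
          biprod.inr := by simp
      exact e
    · exact Category.comp_id _
  · apply Hom.ext
    · have e : (𝟙 (Q ⊞ P') - biprod.fst ≫ s ≫ biprod.inr) ≫ (biprod.fst : Q ⊞ P' ⟶ Q) =
          biprod.fst := by simp
      exact e
    · exact Category.id_comp _

lemma Ea_equiv_imp {B : R} (ρ : Q' ⟶ B) (hgρ : g ≫ ρ = 0)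
    (a0 b0 : Q ⟶ Q') (a1 b1 : P ⟶ P') (ha : a1 ≫ g = f ≫ a0) (hb : b1 ≫ g = f ≫ b0)
    (h : ExtEquiv _ _ (Ea f g a0 a1 ha) (Ea f g b0 b1 hb)) : a0 ≫ ρ = b0 ≫ ρ := by
  obtain ⟨φ, h1, h2⟩ := h
  have c := Hom.comm0 φ.hom
  have u1 : (biprod.inr : Q' ⟶ P ⊞ Q') ≫ Hom.f1 φ.hom = biprod.inr := congrArg Hom.f1 h1
  have u2 : Hom.f0 φ.hom ≫ (biprod.fst : Q ⊞ P' ⟶ Q) = biprod.fst := congrArg Hom.f0 h2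
  generalize Hom.f0 φ.hom = φ0 at *
  generalize Hom.f1 φ.hom = φ1 at *
  dsimp [Ea, EaCx] at φ0 φ1 c u1 u2
  have c' := congrArg (fun z => biprod.inl ≫ z ≫ biprod.snd ≫ ρ) c
  simp [reassoc_of% u1] at c'
  have e : φ0 = biprod.fst ≫ biprod.inl + (φ0 ≫ biprod.snd) ≫ biprod.inr := by
    apply biprod.hom_ext <;> simp [u2]
  rw [c', e]
  simp [hgρ]

end EaSec
end Z2Cx
namespace Z2Cx

/-- Interchange of the gradings (without signs). -/
def swap (M : Z2Cx R) : Z2Cx R := ⟨M.X1, M.X0, M.d1, M.d0, M.d10, M.d01⟩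

/-- Interchange of the gradings on morphisms. -/
def swapHom {M N : Z2Cx R} (f : M ⟶ N) : swap M ⟶ swap N :=
  ⟨Hom.f1 f, Hom.f0 f, Hom.comm1 f, Hom.comm0 f⟩

/-- Interchange of the gradings on isomorphisms. -/
def swapIso {M N : Z2Cx R} (e : M ≅ N) : swap M ≅ swap N where
  hom := swapHom e.hom
  inv := swapHom e.inv
  hom_inv_id := Hom.ext (congrArg Hom.f1 e.hom_inv_id) (congrArg Hom.f0 e.hom_inv_id)
  inv_hom_id := Hom.ext (congrArg Hom.f1 e.inv_hom_id) (congrArg Hom.f0 e.inv_hom_id)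

/-- Interchange of the gradings on extensions. -/
def swapExt {M N : Z2Cx R} (s : ExtSES M N) : ExtSES (swap M) (swap N) :=
  ⟨swap s.E, swapHom s.i, swapHom s.p, s.w1, s.w0, s.ex1, s.ex0⟩

lemma swapExt_equiv {M N : Z2Cx R} {s t : ExtSES M N} (h : ExtEquiv M N s t) :
    ExtEquiv _ _ (swapExt s) (swapExt t) := by
  obtain ⟨φ, h1, h2⟩ := h
  exact ⟨swapIso φ, Hom.ext (congrArg Hom.f1 h1) (congrArg Hom.f0 h1),
    Hom.ext (congrArg Hom.f1 h2) (congrArg Hom.f0 h2)⟩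

/-- Interchange of the gradings on extension classes. -/
def swapCl (M N : Z2Cx R) : ExtCl M N ≃ ExtCl (swap M) (swap N) where
  toFun := Quot.map swapExt (fun _ _ h => swapExt_equiv h)
  invFun := Quot.map (fun s => (swapExt s : ExtSES M N)) (fun _ _ h => swapExt_equiv h)
  left_inv := by rintro ⟨s⟩; rfl
  right_inv := by rintro ⟨s⟩; rfl

end Z2Cx

lemma ccls_eq {M N : Z2Cx R} : ccls R M = ccls R N ↔ Nonempty (M ≅ N) := by
  constructor
  · intro h
    have := Quot.eqvGen_exact h
    induction this with
    | rel _ _ h' => exact h'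
    | refl _ => exact ⟨Iso.refl _⟩
    | symm _ _ h' ih => exact (ih (Quot.eqvGen_sound h')).map Iso.symm
    | trans _ _ _ h1 h2 ih1 ih2 =>
      obtain ⟨e1⟩ := ih1 (Quot.eqvGen_sound h1)
      obtain ⟨e2⟩ := ih2 (Quot.eqvGen_sound h2)
      exact ⟨e1 ≪≫ e2⟩
  · exact fun h => Quot.sound h

lemma ccls_swap {M N : Z2Cx R} :
    ccls R (Z2Cx.swap M) = ccls R (Z2Cx.swap N) ↔ ccls R M = ccls R N := by
  rw [ccls_eq, ccls_eq]
  exact ⟨fun ⟨e⟩ => ⟨Z2Cx.swapIso e⟩, fun ⟨e⟩ => ⟨Z2Cx.swapIso e⟩⟩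

lemma extCount_swap (M N X : Z2Cx R) :
    extCount R (Z2Cx.swap M) (Z2Cx.swap N) (ccls R (Z2Cx.swap X)) =
      extCount R M N (ccls R X) := by
  unfold extCount
  refine (Nat.card_congr ((Z2Cx.swapCl M N).subtypeEquiv ?_)).symm
  rintro ⟨s⟩
  exact ccls_swap.symm

section count
variable {P Q P' Q' : R} (f : P ⟶ Q) (g : P' ⟶ Q')

open Z2Cx

lemma EaCx_zero (h : (0 : P ⟶ P') ≫ g = f ≫ (0 : Q ⟶ Q')) :
    ccls R (EaCx f g 0 0 h) = ccls R (dsum R (Cf R f) (dagger R (Cf R g))) := by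
  rw [ccls_eq]
  refine ⟨isoMk (Iso.refl _) (Iso.refl _) ?_ ?_⟩
  · apply biprod.hom_ext' <;> simp [EaCx, dsum, Cf, dagger]
  · apply biprod.hom_ext' <;> simp [EaCx, dsum, Cf, dagger]

lemma EaCx_unit (c : k) (hc : c ≠ 0) (h : (c • 𝟙 P) ≫ f = f ≫ (c • 𝟙 Q)) :
    ccls R (EaCx f f (c • 𝟙 Q) (c • 𝟙 P) h) =
      ccls R (dsum R (KP R P) (dagger R (KP R Q))) := by
  rw [ccls_eq]
  let e0 : (Q ⊞ P) ≅ (P ⊞ Q) :=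
    { hom := biprod.desc (-(c • biprod.inr)) (c⁻¹ • biprod.inl + f ≫ biprod.inr)
      inv := biprod.desc (c • biprod.inr + f ≫ biprod.inl) (-(c⁻¹ • biprod.inl))
      hom_inv_id := by
        apply biprod.hom_ext' <;> simp [smul_smul, hc]
      inv_hom_id := by
        apply biprod.hom_ext' <;> simp [smul_smul, hc] }
  refine ⟨isoMk (M := EaCx f f (c • 𝟙 Q) (c • 𝟙 P) h)
    (N := dsum R (KP R P) (dagger R (KP R Q))) e0 (Iso.refl _) ?_ ?_⟩
  · apply biprod.hom_ext' <;> simp [EaCx, dsum, KP, dagger, e0]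
  · apply biprod.hom_ext' <;> simp [EaCx, dsum, KP, dagger, e0, smul_smul, hc]

lemma extCount_trivial [Projective P] [Projective Q] [Mono g]
    (hker : ∀ x : Q ⟶ Q', ∃ s : Q ⟶ P', s ≫ g = x) (c : CxCls R) :
    extCount R (Cf R f) (dagger R (Cf R g)) c =
      if ccls R (dsum R (Cf R f) (dagger R (Cf R g))) = c then 1 else 0 := by
  have key : ∀ x : ExtCl (Cf R f) (dagger R (Cf R g)),
      x = Quot.mk _ (Ea f g 0 0 (by simp)) := by
    rintro ⟨s⟩
    obtain ⟨a0, a1, h, e⟩ := ext_exists f g s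
    exact extCl_eq.2 (extEquiv_trans e
      (Ea_equiv f g (0 : Q' ⟶ Q') (fun x _ => hker x) _ _ _ _ _ _ (by simp)))
  have mid : extMid R (Quot.mk _ (Ea f g 0 0 (by simp)) : ExtCl (Cf R f) (dagger R (Cf R g))) =
      ccls R (dsum R (Cf R f) (dagger R (Cf R g))) :=
    EaCx_zero f g (by simp)
  unfold extCount
  split_ifs with h
  · have : Unique {x : ExtCl (Cf R f) (dagger R (Cf R g)) // extMid R x = c} :=
      { default := ⟨_, mid.trans h⟩
        uniq := fun x => Subtype.ext (key x.1) }
    exact Nat.card_unique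
  · have : IsEmpty {x : ExtCl (Cf R f) (dagger R (Cf R g)) // extMid R x = c} :=
      ⟨fun x => h (by rw [← mid, ← key x.1, x.2])⟩
    exact Nat.card_of_isEmpty

lemma extCount_main [Projective P] [Projective Q] {A : R} (π : Q ⟶ A) (w : f ≫ π = 0)
    (hS : (ShortComplex.mk f π w).ShortExact) (hA : ¬ IsZero A)
    (hEnd : ∀ f : A ⟶ A, ∃ c : k, f = c • 𝟙 A) (c : CxCls R) :
    extCount R (Cf R f) (dagger R (Cf R f)) c =
      (if ccls R (dsum R (Cf R f) (dagger R (Cf R f))) = c then 1 else 0) +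
      (Fintype.card k - 1) *
        (if ccls R (dsum R (KP R P) (dagger R (KP R Q))) = c then 1 else 0) := by
  have := hS.mono_f
  have := hS.epi_g
  dsimp at *
  have hh : ∀ c : k, (c • 𝟙 P) ≫ f = f ≫ (c • 𝟙 Q) := by intro c; simp
  let F : k → ExtCl (Cf R f) (dagger R (Cf R f)) := fun c =>
    Quot.mk _ (Ea f f (c • 𝟙 Q) (c • 𝟙 P) (hh c))
  have hF : Function.Bijective F := by
    constructor
    · intro a b hab
      have := Ea_equiv_imp f f π w _ _ _ _ _ _ (extCl_eq.1 hab)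
      simp only [Linear.smul_comp, Category.id_comp] at this
      by_contra hne
      have h0 : (a - b) • π = 0 := by rw [sub_smul, this, sub_self]
      have h1 : π = 0 := (smul_eq_zero.1 h0).resolve_left (sub_ne_zero.2 hne)
      apply hA
      rw [IsZero.iff_id_eq_zero, ← cancel_epi π, h1]
      simp
    · rintro ⟨s⟩
      obtain ⟨a0, a1, h, e⟩ := ext_exists f f s
      have hz : f ≫ a0 ≫ π = 0 := by rw [← reassoc_of% h, w]; simp
      obtain ⟨α, hα⟩ : ∃ α : A ⟶ A, π ≫ α = a0 ≫ π :=
        ⟨hS.exact.desc (a0 ≫ π) hz, hS.exact.g_desc _ _⟩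
      obtain ⟨c, rfl⟩ := hEnd α
      refine ⟨c, extCl_eq.2 (extEquiv_symm (extEquiv_trans e
        (Ea_equiv f f π (fun x hx => ⟨hS.exact.lift x hx, hS.exact.lift_f _ _⟩)
          _ _ _ _ _ _ ?_)))⟩
      rw [← hα]; simp
  have mid : ∀ a : k, extMid R (F a) = if a = 0 then
      ccls R (dsum R (Cf R f) (dagger R (Cf R f))) else
      ccls R (dsum R (KP R P) (dagger R (KP R Q))) := by
    intro a
    change ccls R (EaCx f f (a • 𝟙 Q) (a • 𝟙 P) (hh a)) = _
    split_ifs with ha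
    · subst ha
      rw [← EaCx_zero f f (by simp)]
      congr 2 <;> simp
    · exact EaCx_unit f a ha _
  unfold extCount
  rw [← Nat.card_congr ((Equiv.ofBijective F hF).subtypeEquiv (p := fun a => extMid R (F a) = c)
    (fun a => Iff.rfl))]
  rw [Nat.card_eq_fintype_card, Fintype.card_subtype, Finset.card_filter,
    ← Finset.add_sum_erase _ _ (Finset.mem_univ (0 : k))]
  congr 1
  · rw [mid]; simp
  · rw [Finset.sum_congr rfl (g := fun _ =>
      if ccls R (dsum R (KP R P) (dagger R (KP R Q))) = c then 1 else 0)]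
    · rw [Finset.sum_const, Finset.card_erase_of_mem (Finset.mem_univ _), Finset.card_univ,
        smul_eq_mul]
    · intro a ha
      rw [mid, if_neg (Finset.ne_of_mem_erase ha)]

end count
section count2
open Z2Cx
variable {P Q : R} (f : P ⟶ Q)

lemma dagger_Cf_eq : dagger R (Cf R f) = swap (Cf R (-f)) := by
  simp only [dagger, swap, Cf, Z2Cx.mk.injEq, heq_eq_eq, true_and]
  exact ⟨rfl, neg_zero⟩

lemma Cf_eq_swap : Cf R f = swap (dagger R (Cf R (-f))) := by
  have h : -(0 : Q ⟶ P) = 0 := neg_zero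
  have h' : - -f = f := neg_neg f
  simp only [dagger, swap, Cf, h, h']

lemma extCount_dagger (X : Z2Cx R) :
    extCount R (dagger R (Cf R f)) (Cf R f) (ccls R X) =
      extCount R (Cf R (-f)) (dagger R (Cf R (-f))) (ccls R (swap X)) := by
  rw [← extCount_swap (Cf R (-f)), ← dagger_Cf_eq, ← Cf_eq_swap]
  rfl

lemma ccls_dsum_swap : ccls R (dsum R (Cf R (-f)) (dagger R (Cf R (-f)))) =
    ccls R (swap (dsum R (Cf R f) (dagger R (Cf R f)))) := by
  rw [ccls_eq]
  refine ⟨isoMk (M := dsum R (Cf R (-f)) (dagger R (Cf R (-f))))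
    (N := swap (dsum R (Cf R f) (dagger R (Cf R f)))) (biprod.braiding Q P)
    (biprod.braiding P Q) ?_ ?_⟩
  · apply biprod.hom_ext' <;> apply biprod.hom_ext <;> simp [dsum, Cf, dagger, swap]
  · apply biprod.hom_ext' <;> apply biprod.hom_ext <;> simp [dsum, Cf, dagger, swap]

lemma ccls_dsum_KP_swap (P Q : R) : ccls R (dsum R (KP R P) (dagger R (KP R Q))) =
    ccls R (swap (dsum R (KP R Q) (dagger R (KP R P)))) := by
  rw [ccls_eq]
  let e1 : (P ⊞ Q) ≅ (Q ⊞ P) :=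
    { hom := -(biprod.braiding P Q).hom
      inv := -(biprod.braiding P Q).inv
      hom_inv_id := by simp
      inv_hom_id := by simp }
  refine ⟨isoMk (M := dsum R (KP R P) (dagger R (KP R Q)))
    (N := swap (dsum R (KP R Q) (dagger R (KP R P)))) (biprod.braiding P Q) e1 ?_ ?_⟩
  · apply biprod.hom_ext' <;> apply biprod.hom_ext <;> simp [dsum, KP, dagger, swap, e1]
  · apply biprod.hom_ext' <;> apply biprod.hom_ext <;> simp [dsum, KP, dagger, swap, e1]

lemma neg_shortExact {A : R} (π : Q ⟶ A) (w : f ≫ π = 0)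
    (hS : (ShortComplex.mk f π w).ShortExact) :
    (ShortComplex.mk (-f) π (by simp [w])).ShortExact := by
  let e : P ≅ P := { hom := -𝟙 P, inv := -𝟙 P, hom_inv_id := by simp, inv_hom_id := by simp }
  refine ShortComplex.shortExact_of_iso (ShortComplex.isoMk e (Iso.refl Q) (Iso.refl A) ?_ ?_) hS
  · simp [e]
  · simp

lemma extCount_main' [Projective P] [Projective Q] {A : R} (π : Q ⟶ A) (w : f ≫ π = 0)
    (hS : (ShortComplex.mk f π w).ShortExact) (hA : ¬ IsZero A)
    (hEnd : ∀ f : A ⟶ A, ∃ c : k, f = c • 𝟙 A) (c : CxCls R) :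
    extCount R (dagger R (Cf R f)) (Cf R f) c =
      (if ccls R (dsum R (Cf R f) (dagger R (Cf R f))) = c then 1 else 0) +
      (Fintype.card k - 1) *
        (if ccls R (dsum R (KP R Q) (dagger R (KP R P))) = c then 1 else 0) := by
  obtain ⟨X⟩ := c
  change extCount R (dagger R (Cf R f)) (Cf R f) (ccls R X) =
      (if ccls R (dsum R (Cf R f) (dagger R (Cf R f))) = ccls R X then 1 else 0) +
      (Fintype.card k - 1) *
        (if ccls R (dsum R (KP R Q) (dagger R (KP R P))) = ccls R X then 1 else 0)
  rw [extCount_dagger, extCount_main (-f) π _ (neg_shortExact f π w hS) hA hEnd,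
    ccls_dsum_swap, ccls_dsum_KP_swap]
  simp only [ccls_swap]

lemma extCount_zero [Projective P] [Projective Q] [IsIso f] (c : CxCls R) :
    extCount R (dagger R (Cf R f)) (Cf R f) c = extCount R (Cf R f) (dagger R (Cf R f)) c := by
  obtain ⟨X⟩ := c
  change extCount R _ _ (ccls R X) = extCount R _ _ (ccls R X)
  rw [extCount_dagger, extCount_trivial, extCount_trivial, ccls_dsum_swap]
  · simp only [ccls_swap]
  · exact fun x => ⟨x ≫ inv f, by simp⟩
  · exact fun x => ⟨-(x ≫ inv f), by simp⟩

end count2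

section K0lem
open ZeroObject

lemma cls_ses (S : ShortComplex R) (h : S.ShortExact) :
    K0.cls R S.X₂ = K0.cls R S.X₁ + K0.cls R S.X₃ := by
  have : (QuotientAddGroup.mk (FreeAbelianGroup.of S.X₂ - FreeAbelianGroup.of S.X₁ -
      FreeAbelianGroup.of S.X₃) : K0 R) = 0 := by
    rw [QuotientAddGroup.eq_zero_iff]
    exact AddSubgroup.subset_closure ⟨S, h, rfl⟩
  have h2 : K0.cls R S.X₂ - K0.cls R S.X₁ - K0.cls R S.X₃ = 0 := this
  rw [sub_sub, sub_eq_zero] at h2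
  exact h2

lemma cls_biprod (X Y : R) : K0.cls R (X ⊞ Y) = K0.cls R X + K0.cls R Y := by
  rw [add_comm]; exact cls_ses _ (Z2Cx.biprod_shortExact X Y)

lemma cls_zero {X : R} (h : IsZero X) : K0.cls R X = 0 := by
  have : (ShortComplex.mk (𝟙 X) (0 : X ⟶ X) (by simp)).ShortExact :=
    { exact := ShortComplex.exact_of_isZero_X₂ _ h
      mono_f := inferInstanceAs (Mono (𝟙 X))
      epi_g := ⟨fun _ _ _ => h.eq_of_src _ _⟩ }
  simpa using cls_ses _ this

lemma cls_iso {X Y : R} (e : X ≅ Y) : K0.cls R X = K0.cls R Y := by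
  have : (ShortComplex.mk (0 : (0 : R) ⟶ X) e.hom (by simp)).ShortExact :=
    { exact := (ShortComplex.exact_iff_mono _ rfl).2 (inferInstanceAs (Mono e.hom))
      mono_f := ⟨fun _ _ _ => (isZero_zero R).eq_of_tgt _ _⟩
      epi_g := inferInstanceAs (Epi e.hom) }
  have := cls_ses _ this
  simpa [cls_zero (isZero_zero R)] using this

end K0lem

section dec
open Z2Cx
variable (dd : DecData R) {P Q : R} (f : P ⟶ Q) [Mono f]

lemma isZero_of_mono_zero {X Y : R} {g : X ⟶ Y} [Mono g] (h : g = 0) : IsZero X := by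
  rw [IsZero.iff_id_eq_zero, ← cancel_mono g, h]; simp

lemma dec_aux {P1 Q1 P1' Q1' : R} (f1 : P1 ⟶ Q1) (g1 : P1' ⟶ Q1') [Mono g1]
    (e1 : P ≅ P1 ⊞ Q1') (e0 : Q ≅ Q1 ⊞ P1')
    (c1 : f ≫ e0.hom = e1.hom ≫ biprod.map f1 0)
    (c0 : e0.hom ≫ biprod.map (0 : Q1 ⟶ P1) (-g1) = 0) :
    K0.cls R P1 = K0.cls R P ∧ K0.cls R P1' = 0 := by
  have zP' : IsZero P1' := by
    apply isZero_of_mono_zero (g := g1)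
    have h0 : biprod.map (0 : Q1 ⟶ P1) (-g1) = 0 := by
      rw [← cancel_epi e0.hom, c0, comp_zero]
    have h1 := congrArg (fun z => (biprod.inr : P1' ⟶ Q1 ⊞ P1') ≫ z ≫
      (biprod.snd : P1 ⊞ Q1' ⟶ Q1')) h0
    simpa using h1
  have zQ' : IsZero Q1' := by
    apply isZero_of_mono_zero (g := (biprod.inr : Q1' ⟶ P1 ⊞ Q1') ≫ e1.inv ≫ f)
    rw [← cancel_mono e0.hom]
    simp [c1]
  constructor
  · rw [cls_iso e1, cls_biprod, cls_zero zQ', add_zero]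
  · rw [cls_zero zP']

lemma dec_aux' {P1 Q1 P1' Q1' : R} (f1 : P1 ⟶ Q1) (g1 : P1' ⟶ Q1') [Mono f1]
    (e0 : P ≅ Q1 ⊞ P1') (e1 : Q ≅ P1 ⊞ Q1')
    (c0 : (-f) ≫ e1.hom = e0.hom ≫ biprod.map 0 (-g1))
    (c1 : e1.hom ≫ biprod.map f1 (0 : Q1' ⟶ P1') = 0) :
    K0.cls R P1 = 0 ∧ K0.cls R P1' = K0.cls R P := by
  have zP : IsZero P1 := by
    apply isZero_of_mono_zero (g := f1)
    have h0 : biprod.map f1 (0 : Q1' ⟶ P1') = 0 := by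
      rw [← cancel_epi e1.hom, c1, comp_zero]
    have h1 := congrArg (fun z => (biprod.inl : P1 ⟶ P1 ⊞ Q1') ≫ z ≫
      (biprod.fst : Q1 ⊞ P1' ⟶ Q1)) h0
    simpa using h1
  have zQ : IsZero Q1 := by
    apply isZero_of_mono_zero (g := (biprod.inl : Q1 ⟶ Q1 ⊞ P1') ≫ e0.inv ≫ (-f))
    rw [← cancel_mono e1.hom, Category.assoc, Category.assoc, c0]
    simp
  constructor
  · rw [cls_zero zP]
  · rw [cls_iso e0, cls_biprod, cls_zero zQ, zero_add]

lemma dec_Cf [Projective P] [Projective Q] :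
    dd.cplus (Cf R f) = K0.cls R P ∧ dd.cminus (Cf R f) = 0 := by
  obtain ⟨P1, Q1, P1', Q1', f1, g1, _, _, _, _, _, _, ⟨e⟩, hp, hm⟩ :=
    dd.spec (Cf R f) (inferInstanceAs (Projective Q)) (inferInstanceAs (Projective P))
  rw [hp, hm]
  have hz : -(0 : Q1' ⟶ P1') = 0 := neg_zero
  refine dec_aux f f1 g1 (iso1 e) (iso0 e) ?_ ?_
  · rw [← hz]; exact Hom.comm1 e.hom
  · exact (Hom.comm0 e.hom).symm.trans zero_comp

lemma dec_dagger [Projective P] [Projective Q] : dd.cplus (dagger R (Cf R f)) = 0 ∧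
    dd.cminus (dagger R (Cf R f)) = K0.cls R P := by
  obtain ⟨P1, Q1, P1', Q1', f1, g1, _, _, _, _, _, _, ⟨e⟩, hp, hm⟩ :=
    dd.spec (dagger R (Cf R f)) (inferInstanceAs (Projective P)) (inferInstanceAs (Projective Q))
  rw [hp, hm]
  have hz : -(0 : Q1' ⟶ P1') = 0 := neg_zero
  have hz' : -(0 : Q ⟶ P) = 0 := neg_zero
  refine dec_aux' f f1 g1 (iso0 e) (iso1 e) ?_ ?_
  · exact Hom.comm0 e.hom
  · rw [← hz]
    refine (Hom.comm1 e.hom).symm.trans ?_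
    change (-(0 : Q ⟶ P)) ≫ Hom.f0 e.hom = 0
    rw [hz']
    exact zero_comp

lemma H1_Cf : IsZero (H1 R (Cf R f)) :=
  (ShortComplex.exact_iff_isZero_homology _).1
    ((ShortComplex.exact_iff_mono _ rfl).2 (inferInstanceAs (Mono f)))

lemma H0_dagger : IsZero (H0 R (dagger R (Cf R f))) :=
  (ShortComplex.exact_iff_isZero_homology _).1
    ((ShortComplex.exact_iff_mono _ neg_zero).2 (inferInstanceAs (Mono (-f))))

lemma H0_KP (P : R) : IsZero (H0 R (KP R P)) :=
  (ShortComplex.exact_iff_isZero_homology _).1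
    ((ShortComplex.exact_iff_epi _ rfl).2 (inferInstanceAs (Epi (𝟙 P))))

lemma H1_dagger_KP (P : R) : IsZero (H1 R (dagger R (KP R P))) :=
  (ShortComplex.exact_iff_isZero_homology _).1
    ((ShortComplex.exact_iff_epi _ neg_zero).2 (inferInstanceAs (Epi (-𝟙 P))))

lemma isFinHom_zero {X : R} (h : IsZero X) : IsFinHom R X := fun M => by
  have : Subsingleton (M ⟶ X) := ⟨fun _ _ => h.eq_of_tgt _ _⟩
  infer_instance

lemma finCx_KP (P : R) (hP : Projective P) : FinCx R (KP R P) :=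
  ⟨hP, hP, isFinHom_zero (H0_KP P), isFinHom_zero (H1_Cf (𝟙 P))⟩

lemma finCx_dagger_KP (P : R) (hP : Projective P) : FinCx R (dagger R (KP R P)) :=
  ⟨hP, hP, isFinHom_zero (H0_dagger (𝟙 P)), isFinHom_zero (H1_dagger_KP P)⟩

lemma card_hom_one {M N : Z2Cx R} (h0 : IsZero (H0 R M) ∨ IsZero (H0 R N))
    (h1 : IsZero (H1 R M) ∨ IsZero (H1 R N)) : Nat.card (Hcx R M ⟶ Hcx R N) = 1 := by
  have : Unique (Hcx R M ⟶ Hcx R N) :=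
    { default := ⟨0, 0, by simp, by simp⟩
      uniq := fun a => by
        apply Hom.ext
        · rcases h0 with h | h
          · exact h.eq_of_src _ _
          · exact h.eq_of_tgt _ _
        · rcases h1 with h | h
          · exact h.eq_of_src _ _
          · exact h.eq_of_tgt _ _ }
  exact Nat.card_unique

end dec
section final
open Z2Cx

lemma hallCoeff_eq (S : DHSetting k R) (M N : Z2Cx R) (c : CxCls R)
    (hcard : Nat.card (Hcx R M ⟶ Hcx R N) = 1) (t : ℚ)
    (ht : S.ed.eQ (K0.cls R M.X0) (K0.cls R N.X0) + S.ed.eQ (K0.cls R M.X1) (K0.cls R N.X1) -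
      2 * mu S.ed S.dd M N = t) :
    hallCoeff S.v S.ed S.dd M N c = ((S.v ^ (t : ℝ) : ℝ) : ℂ) * (extCount R M N c : ℂ) := by
  unfold hallCoeff hVal
  have hv := S.v_pos
  rw [hcard, ← S.v_sq, ← Real.rpow_natCast, ← Real.rpow_mul hv.le, Nat.cast_one, _root_.mul_one,
    ← ht, mul_div_right_comm, ← Real.rpow_sub hv]
  push_cast
  rfl

variable {P Q : R} [Projective P] [Projective Q]

lemma mulH_KP (S : DHSetting k R) (P Q : R) (hP : Projective P) (hQ : Projective Q)
    (c : FCls R) :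
    (S.mulH (Finsupp.single (fcls R ⟨KP R P, finCx_KP P hP⟩) 1)
      (Finsupp.single (fcls R ⟨dagger R (KP R Q), finCx_dagger_KP Q hQ⟩) 1)) c =
      if ccls R (dsum R (KP R P) (dagger R (KP R Q))) = fc2c R c then 1 else 0 := by
  refine (S.mulH_single _ _ c).trans ?_
  have d1 : S.dd.cplus (KP R P) = _ ∧ S.dd.cminus (KP R P) = _ := dec_Cf S.dd (𝟙 P)
  have d2 : S.dd.cplus (dagger R (KP R Q)) = _ ∧ S.dd.cminus (dagger R (KP R Q)) = _ :=
    dec_dagger S.dd (𝟙 Q)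
  have h : extCount R (KP R P) (dagger R (KP R Q)) (fc2c R c) = _ :=
    extCount_trivial (𝟙 P) (𝟙 Q) (fun x => ⟨x, by simp⟩) (fc2c R c)
  change hallCoeff S.v S.ed S.dd (KP R P) (dagger R (KP R Q)) (fc2c R c) = _
  rw [hallCoeff_eq S (KP R P) (dagger R (KP R Q)) _ (card_hom_one (Or.inr (H0_dagger (𝟙 Q))) (Or.inl (H1_Cf (𝟙 P)))) 0,
    h]
  · simp only [Rat.cast_zero, Real.rpow_zero, Complex.ofReal_one, _root_.one_mul, Nat.cast_ite,
      Nat.cast_one, Nat.cast_zero]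
    rfl
  · unfold mu
    rw [d1.1, d1.2, d2.1, d2.2]
    simp [KP, dagger]
    ring

lemma loc_KP (S : DHSetting k R) (P Q : R) (hP : Projective P) (hQ : Projective Q) :
    S.loc (S.mulH (Finsupp.single (fcls R ⟨KP R P, finCx_KP P hP⟩) 1)
      (Finsupp.single (fcls R ⟨dagger R (KP R Q), finCx_dagger_KP Q hQ⟩) 1)) =
      S.KK (K0.cls R P, K0.cls R Q) := by
  rw [← S.loc_mul, S.KK_P P hP, S.KK_Pd Q hQ, S.KK_mul]
  simp

lemma mulH_comm (S : DHSetting k R) (f : P ⟶ Q) {A : R} (π : Q ⟶ A) (w : f ≫ π = 0)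
    (hS : (ShortComplex.mk f π w).ShortExact)
    (hEnd : ∀ f : A ⟶ A, ∃ c : k, f = c • 𝟙 A)
    (h1 : FinCx R (Cf R f)) (h2 : FinCx R (dagger R (Cf R f))) (n : ℂ)
    (hn : n = if IsZero A then 0 else (Fintype.card k : ℂ) - 1) :
    S.mulH (Finsupp.single (fcls R ⟨Cf R f, h1⟩) 1)
        (Finsupp.single (fcls R ⟨dagger R (Cf R f), h2⟩) 1) -
      S.mulH (Finsupp.single (fcls R ⟨dagger R (Cf R f), h2⟩) 1)
        (Finsupp.single (fcls R ⟨Cf R f, h1⟩) 1) =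
    (((S.v ^ ((S.ed.eQ (K0.cls R Q) (K0.cls R P) - S.ed.eQ (K0.cls R P) (K0.cls R Q) : ℚ) : ℝ) : ℝ)
      : ℂ) * n) •
     (S.mulH (Finsupp.single (fcls R ⟨KP R P, finCx_KP P inferInstance⟩) 1)
        (Finsupp.single (fcls R ⟨dagger R (KP R Q), finCx_dagger_KP Q inferInstance⟩) 1) -
      S.mulH (Finsupp.single (fcls R ⟨KP R Q, finCx_KP Q inferInstance⟩) 1)
        (Finsupp.single (fcls R ⟨dagger R (KP R P), finCx_dagger_KP P inferInstance⟩) 1)) := by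
  have hm : Mono f := hS.mono_f
  have he : Epi π := hS.epi_g
  have d1 := dec_Cf S.dd f
  have d2 := dec_dagger S.dd f
  ext c
  rw [Finsupp.sub_apply, Finsupp.smul_apply, Finsupp.sub_apply, mulH_KP S P Q inferInstance inferInstance,
    mulH_KP S Q P inferInstance inferInstance]
  refine (congrArg₂ (· - ·) (S.mulH_single _ _ c) (S.mulH_single _ _ c)).trans ?_
  change hallCoeff S.v S.ed S.dd (Cf R f) (dagger R (Cf R f)) (fc2c R c) -
    hallCoeff S.v S.ed S.dd (dagger R (Cf R f)) (Cf R f) (fc2c R c) = _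
  rw [hallCoeff_eq S _ _ _ (card_hom_one (Or.inr (H0_dagger f)) (Or.inl (H1_Cf f)))
      (S.ed.eQ (K0.cls R Q) (K0.cls R P) - S.ed.eQ (K0.cls R P) (K0.cls R Q)),
    hallCoeff_eq S _ _ _ (card_hom_one (Or.inl (H0_dagger f)) (Or.inr (H1_Cf f)))
      (S.ed.eQ (K0.cls R Q) (K0.cls R P) - S.ed.eQ (K0.cls R P) (K0.cls R Q))]
  · rw [smul_eq_mul, mul_assoc, ← mul_sub]
    congr 1
    by_cases hA : IsZero A
    · have : Epi f := (ShortComplex.exact_iff_epi _ (hA.eq_of_tgt _ _)).1 hS.exact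
      have : IsIso f := isIso_of_mono_of_epi f
      rw [extCount_zero, hn, if_pos hA]
      simp
    · rw [extCount_main f π w hS hA hEnd, extCount_main' f π w hS hA hEnd, hn, if_neg hA]
      push_cast [Nat.cast_sub (Fintype.card_pos : 0 < Fintype.card k)]
      ring
  · unfold mu
    rw [d1.1, d1.2, d2.1, d2.2]
    simp [Cf, dagger]
    ring
  · unfold mu
    rw [d1.1, d1.2, d2.1, d2.2]
    simp [Cf, dagger]
    ring

end final

theorem stmt17 (hH : Hereditary k R) (hc : CondC R) (hd : CondD R) (he : CondE R)
    (S : DHSetting k R)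
    -- a fixed choice of projective resolution `0 → P_C → Q_C → C → 0` for each object
    (rP rQ : R → R) (rf : ∀ C : R, rP C ⟶ rQ C) (rπ : ∀ C : R, rQ C ⟶ C)
    (hres : ∀ C : R, IsFinHom R C → Projective (rP C) ∧ Projective (rQ C) ∧
      ∃ w : rf C ≫ rπ C = 0, (ShortComplex.mk (rf C) (rπ C) w).ShortExact)
    (hfc : ∀ C : R, IsFinHom R C → FinCx R (Z2Cx.Cf R (rf C)))
    (hfcd : ∀ C : R, IsFinHom R C → FinCx R (Z2Cx.dagger R (Z2Cx.Cf R (rf C))))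
    (A : R) (hA : IsFinHom R A)
    (hEnd : ∀ f : A ⟶ A, ∃ c : k, f = c • 𝟙 A) :
    S.mulD (Eelt S (Z2Cx.Cf R (rf A)) (hfc A hA))
        (Eelt S (Z2Cx.dagger R (Z2Cx.Cf R (rf A))) (hfcd A hA)) -
      S.mulD (Eelt S (Z2Cx.dagger R (Z2Cx.Cf R (rf A))) (hfcd A hA))
        (Eelt S (Z2Cx.Cf R (rf A)) (hfc A hA)) =
      ((Fintype.card k : ℂ) - 1) •
        (S.KK (0, K0.cls R A) - S.KK (K0.cls R A, 0)) := by
  obtain ⟨hP, hQ, w, hS⟩ := hres A hA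
  have hm : Mono (rf A) := hS.mono_f
  have hcls : K0.cls R (rQ A) = K0.cls R (rP A) + K0.cls R A := cls_ses _ hS
  have hn := mulH_comm S (rf A) (rπ A) w hS hEnd (hfc A hA) (hfcd A hA) _ rfl
  have d1 := dec_Cf S.dd (rf A)
  have d2 := dec_dagger S.dd (rf A)
  have k1 : clsOf R (Z2Cx.Cf R (rf A)) = K0.cls R A := by
    simp [clsOf, Z2Cx.Cf, hcls]
  have k2 : clsOf R (Z2Cx.dagger R (Z2Cx.Cf R (rf A))) = -K0.cls R A := by
    simp [clsOf, Z2Cx.Cf, Z2Cx.dagger, hcls]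
  have hv := S.v_pos
  unfold Eelt
  rw [d1.1, d1.2, d2.1, d2.2]
  have c1 := fun a b => S.comm_rule a b ⟨Z2Cx.Cf R (rf A), hfc A hA⟩
  have c2 := fun a b => S.comm_rule a b ⟨Z2Cx.dagger R (Z2Cx.Cf R (rf A)), hfcd A hA⟩
  have g1 := fun x => S.mul_general x ⟨Z2Cx.Cf R (rf A), hfc A hA⟩
  have g2 := fun x => S.mul_general x ⟨Z2Cx.dagger R (Z2Cx.Cf R (rf A)), hfcd A hA⟩
  dsimp only at c1 c2 g1 g2
  simp only [c1, c2, g1, g2, k1, k2, map_smul, LinearMap.smul_apply, smul_smul]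
  simp only [neg_zero, zero_add, add_zero, ← Complex.ofReal_mul, ← Real.rpow_add hv,
    ← Rat.cast_add]
  have e1 : S.ed.eQ (K0.cls R (rQ A)) (K0.cls R (rP A)) -
      S.ed.eQ (K0.cls R (rP A)) (K0.cls R (rQ A)) =
      S.ed.eQ (K0.cls R A) (K0.cls R (rP A)) - S.ed.eQ (K0.cls R (rP A)) (K0.cls R A) := by
    rw [hcls]; simp
  rw [e1] at hn
  generalize hX : S.mulH (Finsupp.single (fcls R ⟨Z2Cx.Cf R (rf A), hfc A hA⟩) 1)
    (Finsupp.single (fcls R ⟨Z2Cx.dagger R (Z2Cx.Cf R (rf A)), hfcd A hA⟩) 1) = X at *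
  generalize hY : S.mulH (Finsupp.single (fcls R ⟨Z2Cx.dagger R (Z2Cx.Cf R (rf A)), hfcd A hA⟩) 1)
    (Finsupp.single (fcls R ⟨Z2Cx.Cf R (rf A), hfc A hA⟩) 1) = Y at *
  have key : ∀ t : ℚ, t = S.ed.eQ (K0.cls R (rP A)) (K0.cls R A) -
        S.ed.eQ (K0.cls R A) (K0.cls R (rP A)) →
      ((S.v ^ (t : ℝ) : ℝ) : ℂ) •
        S.mulD (S.loc (X - Y)) (S.KK (-K0.cls R (rP A), -K0.cls R (rP A))) =
      ((Fintype.card k : ℂ) - 1) • (S.KK (0, K0.cls R A) - S.KK (K0.cls R A, 0)) := by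
    intro t ht
    rw [hn, map_smul, map_smul, LinearMap.smul_apply, smul_smul, map_sub, loc_KP S (rP A) (rQ A) hP hQ,
      loc_KP S (rQ A) (rP A) hQ hP,
      map_sub, LinearMap.sub_apply, S.KK_mul, S.KK_mul, ← mul_assoc, ← Complex.ofReal_mul,
      ← Real.rpow_add hv, ← Rat.cast_add, ht]
    simp only [sub_add_sub_cancel, sub_self, Rat.cast_zero, Real.rpow_zero, Complex.ofReal_one,
      _root_.one_mul, Prod.mk_add_mk, hcls, add_neg_cancel, add_neg_cancel_comm]
    by_cases hA0 : IsZero A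
    · simp [cls_zero hA0]
    · rw [if_neg hA0]
  rw [← key _ rfl, map_sub S.loc, map_sub S.mulD, LinearMap.sub_apply, smul_sub]
  refine congrArg₂ (· - ·) ?_ ?_
  · congr 5
    simp [sForm]
    ring
  · congr 5
    simp [sForm]
    ring

end
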